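/- arXiv:2111.06299 — 3 statements merged into one kernel-verified Lean document; each statement's English description precedes it below -/
import Mathlib

section
/- Let (T, B) be a tree decomposition of a graph G, rooted at r, of depth d, and let λ be an integer with 1 ≤ λ ≤ d. Then the highway decomposition (T, B') has combinatorial diameter at most 3. -/
/-!
STATEMENT 5: Let (T, B) be a tree decomposition of a graph G, rooted at r, of depth d,
and let λ be an integer with 1 ≤ λ ≤ d. Then the highway decomposition (T, B') has
combinatorial diameter at most 3.
-/

open SimpleGraph

/-- `(T, B)` is a tree decomposition of the graph `G`. -/
structure IsTreeDecomp {V ι : Type*} (G : SimpleGraph V) (T : SimpleGraph ι)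
    (B : ι → Set V) : Prop where
  isTree : T.IsTree
  exists_bag : ∀ v : V, ∃ i, v ∈ B i
  edge_bag : ∀ ⦃u v : V⦄, G.Adj u v → ∃ i, u ∈ B i ∧ v ∈ B i
  bag_connected : ∀ (v : V) (i j : ι), v ∈ B i → v ∈ B j →
    ∀ p : T.Walk i j, p.IsPath → ∀ k ∈ p.support, v ∈ B k

/-- One simplification step: delete a redundant internal node `x` (with neighbors
`u` and `w`, in some labeling of the two neighbors, satisfying `B x ∩ B w ⊆ B u`)
from the list of nodes of a path, joining its two former neighbors. -/
def SimpStep {V ι : Type*} (B : ι → Set V) (l l' : List ι) : Prop :=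
  ∃ (l₁ l₂ : List ι) (u x w : ι),
    l = l₁ ++ u :: x :: w :: l₂ ∧ l' = l₁ ++ u :: w :: l₂ ∧
      (B x ∩ B w ⊆ B u ∨ B x ∩ B u ⊆ B w)

/-- The path `T_{s↔t}` has combinatorial length at most `n`: some simplification of
the (unique) path from `s` to `t` has at most `n` edges (i.e. at most `n + 1` nodes). -/
def CombLenLE {V ι : Type*} (T : SimpleGraph ι) (B : ι → Set V) (s t : ι) (n : ℕ) : Prop :=
  ∀ p : T.Walk s t, p.IsPath →
    ∃ l : List ι, Relation.ReflTransGen (SimpStep B) p.support l ∧ l.length ≤ n + 1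

/-- `(T, B)` has combinatorial diameter at most `n`. -/
def CombDiamLE {V ι : Type*} (T : SimpleGraph ι) (B : ι → Set V) (n : ℕ) : Prop :=
  ∀ s t : ι, CombLenLE T B s t n

/-!
Only two properties of the highway bags matter, for an arbitrary set `S` of synchronization nodes.
If `m ∉ S` is the parent of `m'`, then `B' m ⊆ B' m'`. If `m ∈ S` is a proper ancestor of `x`, then
`B' x ∩ B' m` lies in the union of the bags of the synchronization ancestors of `x`, and hence in
`B' t` for every descendant `t` of `x`. Growing a path that descends to `t` by one node at its top
end, these two properties keep it simplified to `[m, t]`, or to `[m, a, t]` with `B' m ⊆ B' a`. A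
path of `T` consists of two such vertical paths meeting at its highest node `m`; if both keep a
third node, then `m` itself is redundant.
-/

section HighwayDecomposition

variable {V ι : Type*} {G : SimpleGraph V} {T : SimpleGraph ι} {B B' : ι → Set V} {S : Set ι}

/-! ### Simplifications of lists of nodes -/

/-- `l'` is a simplification of the list of nodes `l`: it arises by repeatedly deleting redundant
internal nodes. -/
def Simplifies (B : ι → Set V) : List ι → List ι → Prop :=
  Relation.ReflTransGen (SimpStep B)

namespace Simplifies

variable {l l' l'' : List ι}

lemma refl (l : List ι) : Simplifies B l l :=
  Relation.ReflTransGen.refl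

lemma trans (h : Simplifies B l l') (h' : Simplifies B l' l'') : Simplifies B l l'' :=
  Relation.ReflTransGen.trans h h'

lemma append_append (l₁ l₂ : List ι) (h : Simplifies B l l') :
    Simplifies B (l₁ ++ l ++ l₂) (l₁ ++ l' ++ l₂) := by
  refine Relation.ReflTransGen.lift (fun k => l₁ ++ k ++ l₂) ?_ _ _ h
  rintro _ _ ⟨k₁, k₂, u, x, w, rfl, rfl, hx⟩
  exact ⟨l₁ ++ k₁, k₂ ++ l₂, u, x, w, by simp, by simp, hx⟩

lemma cons (x : ι) (h : Simplifies B l l') : Simplifies B (x :: l) (x :: l') := by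
  simpa using h.append_append [x] []

lemma reverse (h : Simplifies B l l') : Simplifies B l.reverse l'.reverse := by
  refine Relation.ReflTransGen.lift List.reverse ?_ _ _ h
  rintro _ _ ⟨k₁, k₂, u, x, w, rfl, rfl, hx⟩
  exact ⟨k₂.reverse, k₁.reverse, w, x, u, by simp, by simp, hx.symm⟩

lemma delete_second {u x w : ι} (l : List ι) (h : B x ∩ B u ⊆ B w) :
    Simplifies B (u :: x :: w :: l) (u :: w :: l) :=
  .single ⟨[], l, u, x, w, rfl, rfl, .inr h⟩

end Simplifies

/-- The list of nodes `m :: l` of a path descending from `m` simplifies to at most three nodes and,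
if three are left, then the bag of `m` is contained in that of the middle one. -/
def HasShortDescent (B : ι → Set V) (m : ι) (l : List ι) : Prop :=
  ∃ k, Simplifies B (m :: l) (m :: k) ∧ (k.length ≤ 1 ∨ ∃ a b, k = [a, b] ∧ B m ⊆ B a)

lemma HasShortDescent.exists_simplifies_length_le_four {m : ι} {l₁ l₂ : List ι}
    (h₁ : HasShortDescent B m l₁) (h₂ : HasShortDescent B m l₂) :
    ∃ l, Simplifies B (l₁.reverse ++ m :: l₂) l ∧ l.length ≤ 4 := by
  obtain ⟨k₁, hk₁, hshape₁⟩ := h₁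
  obtain ⟨k₂, hk₂, hshape₂⟩ := h₂
  have hjoin : Simplifies B (l₁.reverse ++ m :: l₂) (k₁.reverse ++ m :: k₂) := by
    have hleft := hk₁.reverse.append_append [] l₂
    have hright := hk₂.append_append k₁.reverse []
    simp only [List.reverse_cons, List.nil_append, List.append_nil, List.append_assoc,
      List.singleton_append] at hleft hright
    exact hleft.trans hright
  rcases hshape₁ with hlen₁ | ⟨a₁, b₁, rfl, -⟩ <;> rcases hshape₂ with hlen₂ | ⟨a₂, b₂, rfl, hma₂⟩
  · exact ⟨_, hjoin, by simp; omega⟩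
  · exact ⟨_, hjoin, by simp; omega⟩
  · exact ⟨_, hjoin, by simp; omega⟩
  · have hdelete : Simplifies B [b₁, a₁, m, a₂, b₂] [b₁, a₁, a₂, b₂] :=
      (Simplifies.delete_second [b₂] (Set.inter_subset_left.trans hma₂)).cons b₁
    exact ⟨_, hjoin.trans hdelete, by simp⟩

/-! ### Betweenness in trees -/

/-- `x` lies on a path of `T` from `u` to `w`. In a tree this is the relation `x ∈ T_{u↔w}`, and
`OnPath T v a r` says that `a` is an ancestor of `v` in the tree rooted at `r`. -/
def OnPath (T : SimpleGraph ι) (u x w : ι) : Prop :=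
  ∃ p : T.Walk u w, p.IsPath ∧ x ∈ p.support

section OnPath

variable {r s t u v w x y : ι}

lemma OnPath.symm (h : OnPath T u x w) : OnPath T w x u := by
  obtain ⟨p, hp, hx⟩ := h
  exact ⟨p.reverse, hp.reverse, by simpa using hx⟩

lemma onPath_left (hT : T.Connected) (u w : ι) : OnPath T u u w := by
  obtain ⟨p, hp, -⟩ := hT.exists_path_of_dist u w
  exact ⟨p, hp, p.start_mem_support⟩

lemma onPath_iff_mem_support (hT : T.IsAcyclic) {p : T.Walk u w} (hp : p.IsPath) :
    OnPath T u x w ↔ x ∈ p.support := by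
  refine ⟨?_, fun hx => ⟨p, hp, hx⟩⟩
  rintro ⟨q, hq, hx⟩
  have hqp : q = p := congrArg Subtype.val ((hT.subsingleton_path u w).elim ⟨q, hq⟩ ⟨p, hp⟩)
  exact hqp ▸ hx

lemma length_eq_dist_of_isPath (hT : T.IsTree) {p : T.Walk u w} (hp : p.IsPath) :
    p.length = T.dist u w := by
  obtain ⟨q, hq, hlen⟩ := hT.connected.exists_path_of_dist u w
  rw [(hT.existsUnique_path u w).unique hp hq, hlen]

lemma onPath_iff_dist_add_dist (hT : T.IsTree) :
    OnPath T u x w ↔ T.dist u x + T.dist x w = T.dist u w := by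
  constructor
  · rintro ⟨p, hp, hx⟩
    obtain ⟨q, q', hq, hq', rfl⟩ := hp.mem_support_iff_exists_append.1 hx
    rw [← length_eq_dist_of_isPath hT hq, ← length_eq_dist_of_isPath hT hq',
      ← length_eq_dist_of_isPath hT hp, Walk.length_append]
  · intro h
    obtain ⟨q, hq⟩ := hT.connected.exists_walk_length_eq_dist u x
    obtain ⟨q', hq'⟩ := hT.connected.exists_walk_length_eq_dist x w
    refine ⟨q.append q', Walk.isPath_of_length_eq_dist _ ?_, ?_⟩
    · rw [Walk.length_append, hq, hq', h]
    · exact q.support_subset_support_append_left q' q.end_mem_support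

lemma OnPath.trans (hT : T.IsTree) (hx : OnPath T u x w) (hy : OnPath T x y w) :
    OnPath T u y w := by
  rw [onPath_iff_dist_add_dist hT] at *
  have := hT.connected.dist_triangle (u := u) (v := x) (w := y)
  have := hT.connected.dist_triangle (u := u) (v := y) (w := w)
  omega

lemma OnPath.trans_left (hT : T.IsTree) (hx : OnPath T u x w) (hy : OnPath T x y w) :
    OnPath T u x y := by
  rw [onPath_iff_dist_add_dist hT] at *
  have := hT.connected.dist_triangle (u := u) (v := x) (w := y)
  have := hT.connected.dist_triangle (u := u) (v := y) (w := w)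
  omega

lemma OnPath.antisymm (hT : T.IsTree) (hx : OnPath T u x w) (hw : OnPath T u w x) : x = w := by
  rw [onPath_iff_dist_add_dist hT] at *
  rw [← hT.connected.dist_eq_zero_iff]
  omega

lemma OnPath.left_or_right (hT : T.IsAcyclic) (hx : OnPath T u x w) (hy : OnPath T u y w) :
    OnPath T u x y ∨ OnPath T y x w := by
  obtain ⟨p, hp, hyp⟩ := hy
  obtain ⟨q, q', hq, hq', rfl⟩ := hp.mem_support_iff_exists_append.1 hyp
  rw [onPath_iff_mem_support hT hp, Walk.mem_support_append_iff] at hx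
  exact hx.imp (fun h => ⟨q, hq, h⟩) fun h => ⟨q', hq', h⟩

lemma OnPath.eq_or_eq_of_adj (hT : T.IsAcyclic) (huw : T.Adj u w) (hx : OnPath T u x w) :
    x = u ∨ x = w := by
  simpa using (onPath_iff_mem_support hT (Walk.IsPath.of_adj huw)).1 hx

lemma onPath_or_onPath_of_adj (hT : T.Connected) (huv : T.Adj u v) (r : ι) :
    OnPath T u v r ∨ OnPath T v u r := by
  obtain ⟨q, hq, -⟩ := hT.exists_path_of_dist v r
  by_cases hu : u ∈ q.support
  · exact .inr ⟨q, hq, hu⟩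
  · exact .inl ⟨.cons huv q, hq.cons hu, by simp⟩

lemma exists_mem_support_onPath_onPath (hT : T.IsTree) (r : ι) {p : T.Walk s t} (hp : p.IsPath) :
    ∃ m ∈ p.support, OnPath T s m r ∧ OnPath T t m r := by
  induction p with
  | @nil s => exact ⟨s, by simp, onPath_left hT.connected s r, onPath_left hT.connected s r⟩
  | @cons s s' t hadj p ih =>
    obtain ⟨hp, hs⟩ := (Walk.cons_isPath_iff _ _).1 hp
    obtain ⟨m, hm, hs'm, htm⟩ := ih hp
    rcases onPath_or_onPath_of_adj hT.connected hadj r with hss' | hs's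
    · exact ⟨m, by simp [hm], hss'.trans hT hs'm, htm⟩
    rcases hs's.left_or_right hT.isAcyclic hs'm with hsm | hms
    · have hst : OnPath T s' s t := (OnPath.trans hT (OnPath.symm ⟨p, hp, hm⟩) hsm.symm).symm
      exact absurd ((onPath_iff_mem_support hT.isAcyclic hp).1 hst) hs
    · exact ⟨s, by simp, onPath_left hT.connected s r, htm.trans hT hms⟩

lemma support_eq_of_support_append_eq {p : T.Walk u v} {q : T.Walk v w} (hpq : (p.append q).IsPath)
    {l₁ l₂ : List ι} (h : (p.append q).support = l₁ ++ v :: l₂) : p.support = l₁ ++ [v] := by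
  have hp : p.support.dropLast ++ [v] = p.support := by simp
  have happ : (p.append q).support = p.support.dropLast ++ v :: q.support.tail := by
    rw [Walk.support_append_eq_support_dropLast_append, Walk.cons_tail_support]
  have hnodup : (p.support.dropLast ++ v :: q.support.tail).Nodup := happ ▸ hpq.support_nodup
  obtain ⟨hv_left, hv_right⟩ : v ∉ p.support.dropLast ∧ v ∉ q.support.tail := by
    simpa using (List.nodup_cons.1 (List.nodup_middle.1 hnodup)).1
  rw [← hp, ((List.append_cons_inj_of_notMem hv_left hv_right).1 (happ.symm.trans h)).1]

lemma IsTreeDecomp.mem_bag_of_onPath (hTD : IsTreeDecomp G T B) {e : V} (hx : OnPath T u x w)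
    (hu : e ∈ B u) (hw : e ∈ B w) : e ∈ B x := by
  obtain ⟨p, hp, hxp⟩ := hx
  exact hTD.bag_connected e u w hu hw p hp x hxp

end OnPath

/-! ### Highway bags -/

/-- The bag `B'_v` of the highway decomposition with set of synchronization nodes `S`. The nodes of
`T_{v↔σ(v)}` are described without reference to `σ`, as the ancestors `w` of `v` such that no
synchronization node lies strictly between `v` and `w`. -/
def highwayBag (T : SimpleGraph ι) (r : ι) (S : Set ι) (B : ι → Set V) (v : ι) : Set V :=
  ⋃ w ∈ {w | OnPath T v w r ∧ ((∀ x ∈ S, OnPath T v x w → x = v ∨ x = w) ∨ w ∈ S)}, B w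

section HighwayBag

variable {r m t u v w x : ι} {e : V}

lemma mem_highwayBag : e ∈ highwayBag T r S B v ↔
    ∃ w, (OnPath T v w r ∧ ((∀ x ∈ S, OnPath T v x w → x = v ∨ x = w) ∨ w ∈ S)) ∧ e ∈ B w := by
  simp [highwayBag]

lemma highwayBag_root (hT : T.IsTree) : highwayBag T r S B r = B r := by
  have hroot : ∀ w, OnPath T r w r ↔ w = r := fun w => by
    simpa using onPath_iff_mem_support hT.isAcyclic (Walk.IsPath.nil (u := r))
  ext e
  simp +contextual [mem_highwayBag, hroot]

lemma highwayBag_subset_of_adj (hT : T.IsTree) (huv : T.Adj u v) (hv : OnPath T u v r)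
    (hvS : v ∉ S) : highwayBag T r S B v ⊆ highwayBag T r S B u := by
  intro e he
  obtain ⟨w, ⟨hw, hwS⟩, hew⟩ := mem_highwayBag.1 he
  refine mem_highwayBag.2 ⟨w, ⟨hv.trans hT hw, hwS.imp_left fun hchunk x hxS hx => ?_⟩, hew⟩
  rcases hx.left_or_right hT.isAcyclic (hv.trans_left hT hw) with hx | hx
  · exact (hx.eq_or_eq_of_adj hT.isAcyclic huv).imp_right fun h => absurd (h ▸ hxS) hvS
  · exact .inr ((hchunk x hxS hx).resolve_left fun h => hvS (h ▸ hxS))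

lemma highwayBag_inter_subset (hTD : IsTreeDecomp G T B) (hmS : m ∈ S) (hm : OnPath T x m r)
    (hne : x ≠ m) (hx : OnPath T t x r) :
    highwayBag T r S B x ∩ highwayBag T r S B m ⊆ highwayBag T r S B t := by
  have hT := hTD.isTree
  rintro e ⟨hex, hem⟩
  obtain ⟨z, ⟨hz, hchunk | hzS⟩, hez⟩ := mem_highwayBag.1 hex
  · obtain ⟨y, ⟨hy, -⟩, hey⟩ := mem_highwayBag.1 hem
    suffices e ∈ B m from mem_highwayBag.2 ⟨m, ⟨hx.trans hT hm, .inr hmS⟩, this⟩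
    rcases hm.left_or_right hT.isAcyclic hz with hmz | hmz
    · obtain rfl := (hchunk m hmS hmz).resolve_left hne.symm
      exact hez
    · exact hTD.mem_bag_of_onPath (hmz.trans_left hT hy) hez hey
  · exact mem_highwayBag.2 ⟨z, ⟨hx.trans hT hz, .inr hzS⟩, hez⟩

lemma mem_support_iff_forall_onPath (hT : T.IsTree) {p : T.Walk v r} (hp : p.IsPath)
    {q : T.Walk v u} (hq : q.IsPath) {l₁ l₂ : List ι} (hsupp : p.support = v :: (l₁ ++ u :: l₂))
    (huS : u ∈ S) (hl₁ : ∀ x ∈ l₁, x ∉ S) (hw : w ∈ p.support) :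
    w ∈ q.support ↔ ∀ x ∈ S, OnPath T v x w → x = v ∨ x = w := by
  have hu : u ∈ p.support := by simp [hsupp]
  obtain ⟨q₁, q₂, hq₁, -, rfl⟩ := hp.mem_support_iff_exists_append.1 hu
  obtain rfl := (hT.existsUnique_path v u).unique hq hq₁
  have hq_supp : q.support = v :: (l₁ ++ [u]) :=
    support_eq_of_support_append_eq (l₁ := v :: l₁) hp hsupp
  constructor
  · intro hwq x hxS hx
    have hwu : OnPath T v w u := ⟨q, hq, hwq⟩
    have hxu : OnPath T v x u := (hwu.symm.trans hT hx.symm).symm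
    have hxq := (onPath_iff_mem_support hT.isAcyclic hq).1 hxu
    simp only [hq_supp, List.mem_cons, List.mem_append, List.not_mem_nil, or_false] at hxq
    rcases hxq with rfl | hxl | rfl
    · exact .inl rfl
    · exact absurd hxS (hl₁ x hxl)
    · exact .inr (hx.antisymm hT hwu)
  · intro hchunk
    have hne : u ≠ v := by
      rintro rfl
      simpa [hq_supp] using hq.support_nodup
    have huw : OnPath T v w u ∨ OnPath T u w r :=
      OnPath.left_or_right hT.isAcyclic ⟨_, hp, hw⟩ ⟨_, hp, hu⟩
    rcases huw with h | h
    · exact (onPath_iff_mem_support hT.isAcyclic hq).1 h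
    · have hvuw : OnPath T v u w := OnPath.trans_left hT ⟨_, hp, hu⟩ h
      exact (hchunk u huS hvuw).resolve_left hne ▸ q.end_mem_support

lemma exists_simplifies_of_cons_isPath (hTD : IsTreeDecomp G T B) {q : T.Walk v t}
    (hmv : T.Adj m v) (hp : (Walk.cons hmv q).IsPath) (hm : OnPath T t m r) :
    Simplifies (highwayBag T r S B) (m :: q.support) [m, t] ∨
      ∃ a ∈ q.support, highwayBag T r S B m ⊆ highwayBag T r S B a ∧
        Simplifies (highwayBag T r S B) (m :: q.support) [m, a, t] := by
  have hT := hTD.isTree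
  induction q generalizing m with
  | nil => exact .inl (.refl _)
  | @cons v w t hvw q ih =>
    obtain ⟨hq, hmq⟩ := (Walk.cons_isPath_iff _ _).1 hp
    have hbelow : ∀ a ∈ (Walk.cons hvw q).support, OnPath T t a r ∧ OnPath T a m r := by
      intro a ha
      have htam : OnPath T t a m := OnPath.symm ⟨_, hp, List.mem_cons_of_mem m ha⟩
      exact ⟨(hm.symm.trans hT htam.symm).symm, (hm.symm.trans_left hT htam.symm).symm⟩
    obtain ⟨htv, hvm⟩ := hbelow v (Walk.start_mem_support _)
    have hdelete : ∀ a ∈ (Walk.cons hvw q).support, m ∈ S →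
        Simplifies (highwayBag T r S B) [m, a, t] [m, t] := fun a ha hmS =>
      .delete_second [] <| highwayBag_inter_subset hTD hmS (hbelow a ha).2
        (fun h => hmq (h ▸ ha)) (hbelow a ha).1
    have hsubset : m ∉ S → highwayBag T r S B m ⊆ highwayBag T r S B v :=
      highwayBag_subset_of_adj hT hmv.symm hvm
    rcases ih hvw hq htv with hvt | ⟨a, ha, hva, hvat⟩
    · by_cases hmS : m ∈ S
      · exact .inl ((hvt.cons m).trans (hdelete v (Walk.start_mem_support _) hmS))
      · exact .inr ⟨v, Walk.start_mem_support _, hsubset hmS, hvt.cons m⟩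
    · have haq : a ∈ (Walk.cons hvw q).support := List.mem_cons_of_mem v ha
      have hmat := (hvat.cons m).trans (.delete_second [t] (Set.inter_subset_left.trans hva))
      by_cases hmS : m ∈ S
      · exact .inl (hmat.trans (hdelete a haq hmS))
      · exact .inr ⟨a, haq, (hsubset hmS).trans hva, hmat⟩

lemma hasShortDescent_support_tail (hTD : IsTreeDecomp G T B) {p : T.Walk m t} (hp : p.IsPath)
    (hm : OnPath T t m r) : HasShortDescent (highwayBag T r S B) m p.support.tail := by
  cases p with
  | nil => exact ⟨[], .refl _, .inl (by simp)⟩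
  | cons hmv q =>
    rcases exists_simplifies_of_cons_isPath hTD hmv hp hm with hmt | ⟨a, -, hma, hmat⟩
    · exact ⟨[t], hmt, .inl (by simp)⟩
    · exact ⟨[a, t], hmat, .inr ⟨a, t, rfl, hma⟩⟩

lemma combDiamLE_highwayBag (hTD : IsTreeDecomp G T B) (r : ι) (S : Set ι) :
    CombDiamLE T (highwayBag T r S B) 3 := by
  intro s t p hp
  obtain ⟨m, hmp, hsm, htm⟩ := exists_mem_support_onPath_onPath hTD.isTree r hp
  obtain ⟨up, down, hup, hdown, rfl⟩ := hp.mem_support_iff_exists_append.1 hmp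
  have hsupp : (up.append down).support =
      up.reverse.support.tail.reverse ++ m :: down.support.tail := by
    simp [Walk.support_append_eq_support_dropLast_append]
  rw [hsupp]
  exact (hasShortDescent_support_tail hTD hup.reverse hsm).exists_simplifies_length_le_four
    (hasShortDescent_support_tail hTD hdown htm)

lemma eq_highwayBag (hT : T.IsTree) (syn : ι → ι)
    (hsyn : ∀ v, v ≠ r → ∀ p : T.Walk v r, p.IsPath →
      ∃ l₁ l₂ : List ι, p.support = v :: (l₁ ++ syn v :: l₂) ∧ syn v ∈ S ∧ ∀ w ∈ l₁, w ∉ S)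
    (hB'r : B' r = B r)
    (hB' : ∀ v, v ≠ r → ∀ pr : T.Walk v r, pr.IsPath → ∀ ps : T.Walk v (syn v), ps.IsPath →
      B' v = ⋃ w ∈ {w : ι | w ∈ pr.support ∧ (w ∈ ps.support ∨ w ∈ S)}, B w) :
    B' = highwayBag T r S B := by
  funext v
  by_cases hv : v = r
  · rw [hv, hB'r, highwayBag_root hT]
  obtain ⟨pr, hpr, -⟩ := hT.existsUnique_path v r
  obtain ⟨ps, hps, -⟩ := hT.existsUnique_path v (syn v)
  obtain ⟨l₁, l₂, hsupp, hsynS, hl₁⟩ := hsyn v hv pr hpr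
  have hnodes : ∀ w, (w ∈ pr.support ∧ (w ∈ ps.support ∨ w ∈ S)) ↔
      (OnPath T v w r ∧ ((∀ x ∈ S, OnPath T v x w → x = v ∨ x = w) ∨ w ∈ S)) := fun w => by
    rw [onPath_iff_mem_support hT.isAcyclic hpr]
    exact and_congr_right fun hw =>
      or_congr_left (mem_support_iff_forall_onPath hT hpr hps hsupp hsynS hl₁ hw)
  simp only [hB' v hv pr hpr ps hps, hnodes, highwayBag]

end HighwayBag

theorem stmt5_general (hTD : IsTreeDecomp G T B) {r : ι} (syn : ι → ι)
    (hsyn : ∀ v, v ≠ r → ∀ p : T.Walk v r, p.IsPath →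
      ∃ l₁ l₂ : List ι, p.support = v :: (l₁ ++ syn v :: l₂) ∧ syn v ∈ S ∧ ∀ w ∈ l₁, w ∉ S)
    (hB'r : B' r = B r)
    (hB' : ∀ v, v ≠ r → ∀ pr : T.Walk v r, pr.IsPath → ∀ ps : T.Walk v (syn v), ps.IsPath →
      B' v = ⋃ w ∈ {w : ι | w ∈ pr.support ∧ (w ∈ ps.support ∨ w ∈ S)}, B w) :
    CombDiamLE T B' 3 := by
  rw [eq_highwayBag hTD.isTree syn hsyn hB'r hB']
  exact combDiamLE_highwayBag hTD r S

end HighwayDecomposition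

theorem stmt5 {V ι : Type*} [Fintype V] [Fintype ι]
    (G : SimpleGraph V) (T : SimpleGraph ι) (B : ι → Set V)
    (hTD : IsTreeDecomp G T B)
    (r : ι)
    -- the level of a node: the number of edges on the (unique) path to the root
    (lvl : ι → ℕ)
    (hlvl : ∀ (v : ι) (p : T.Walk v r), p.IsPath → p.length = lvl v)
    -- the depth of the rooted decomposition
    (d : ℕ) (hd : ∀ v, lvl v ≤ d) (hde : ∃ v, lvl v = d)
    (lam : ℕ) (hlam1 : 1 ≤ lam) (hlamd : lam ≤ d)
    -- `syn v` is the synchronization ancestor of `v ≠ r`: the first node after `v`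
    -- on the path from `v` to `r` whose level is divisible by `lam`
    (syn : ι → ι)
    (hsyn : ∀ v, v ≠ r → ∀ p : T.Walk v r, p.IsPath →
      ∃ l₁ l₂ : List ι, p.support = v :: (l₁ ++ syn v :: l₂) ∧
        lam ∣ lvl (syn v) ∧ ∀ w ∈ l₁, ¬ lam ∣ lvl w)
    -- the highway decomposition
    (B' : ι → Set V)
    (hB'r : B' r = B r)
    (hB' : ∀ v, v ≠ r → ∀ pr : T.Walk v r, pr.IsPath → ∀ ps : T.Walk v (syn v), ps.IsPath →
      B' v = ⋃ w ∈ {w : ι | w ∈ pr.support ∧ (w ∈ ps.support ∨ lam ∣ lvl w)}, B w) :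
    CombDiamLE T B' 3 :=
  stmt5_general (S := {v | lam ∣ lvl v}) hTD syn hsyn hB'r hB'
end

section
/- Let ℓ ≥ 3 and let 2 ≤ j ≤ ℓ−1 be an index with B_j ∩ B_{j+1} ⊆ B_{j−1}. Let A be the sequential-sampling distribution for B_1, …, B_ℓ with distributions μ_1, …, μ_ℓ, and let A' be the sequential-sampling distribution for the shortened sequence B_1, …, B_{j−1}, B_{j+1}, …, B_ℓ with the distributions μ_i for i ≠ j (this shortened sequence again satisfies the interval property and consistency). Then A' equals the marginal of A on U' = ⋃_{i ≠ j} B_i: for every assignment g : U' → {0,1}, Pr_{f ∼ A'}[ f = g ] = Pr_{f ∼ A}[ f|_{U'} = g ]. -/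
/-!
STATEMENT 8: Let ℓ ≥ 3 and let 2 ≤ j ≤ ℓ−1 be an index with B_j ∩ B_{j+1} ⊆ B_{j−1}.
Let A be the sequential-sampling distribution for B_1, …, B_ℓ and A' the one for the
shortened sequence B_1, …, B_{j−1}, B_{j+1}, …, B_ℓ.  Then A' equals the marginal of A
on U' = ⋃_{i ≠ j} B_i.  (Below the bags are indexed by `Fin ℓ`, so that the bag
`B_i` of the statement is `B ⟨i-1⟩`.)
-/

variable {V : Type*} [Fintype V] [DecidableEq V]

/-- Restriction of an assignment of `S'` to a subset `S ⊆ S'`. -/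
def res {S S' : Finset V} (h : S ⊆ S') (f : ↥S' → Bool) : ↥S → Bool :=
  fun x => f ⟨x.1, h x.2⟩

/-- The marginal on assignments of `S ⊆ S'` of a distribution `μ` on assignments
of `S'`. -/
noncomputable def marg {S S' : Finset V} (h : S ⊆ S') (μ : (↥S' → Bool) → ℝ) :
    (↥S → Bool) → ℝ :=
  fun g => ∑ f : ↥S' → Bool, if res h f = g then μ f else 0

/-- The sequential-sampling distribution on assignments of `B 0 ∪ … ∪ B (ℓ-1)`:
sample `f|_{B 0}` from `μ 0`; then, for `i = 1, …, ℓ-1` in order, sample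
`f|_{B i \ B (i-1)}` from the conditional distribution of `μ i` given that it agrees
with the already-determined values on `B i ∩ B (i-1)`. -/
noncomputable def seqDensity (ℓ : ℕ) (B : Fin ℓ → Finset V)
    (μ : ∀ i, (↥(B i) → Bool) → ℝ) :
    (↥(Finset.univ.biUnion B) → Bool) → ℝ := fun f =>
  ∏ i : Fin ℓ,
    if (i : ℕ) = 0 then
      μ i (res (Finset.subset_biUnion_of_mem B (Finset.mem_univ i)) f)
    else
      μ i (res (Finset.subset_biUnion_of_mem B (Finset.mem_univ i)) f) /
        marg
          (show B i ∩ B ⟨(i : ℕ) - 1, lt_of_le_of_lt (Nat.sub_le _ _) i.isLt⟩ ⊆ B i from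
            Finset.inter_subset_left)
          (μ i)
          (res
            (Finset.Subset.trans Finset.inter_subset_left
              (Finset.subset_biUnion_of_mem B (Finset.mem_univ i))) f)

/-- The embedding of the indices of the shortened sequence (which skips the index
`j` of `Fin ℓ`) into the indices of the original sequence. -/
def skipIdx (ℓ j : ℕ) (i : Fin (ℓ - 1)) : Fin ℓ :=
  if (i : ℕ) < j then ⟨i, lt_of_lt_of_le i.isLt (Nat.sub_le ℓ 1)⟩
  else ⟨(i : ℕ) + 1, by have := i.isLt; omega⟩

/-!
By the interval property and `B_j ∩ B_{j+1} ⊆ B_{j-1}`, the bag `B_j` meets `U'` exactly in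
`B_j ∩ B_{j-1}`, and `B_{j+1} ∩ B_{j-1} = B_{j+1} ∩ B_j`. The second fact says that the factor of
`B_{j+1}` in the density is the same in both sequences, so `A` is the product of `A'` and the
conditional density of `μ_j` given the values on `B_j ∩ B_{j-1}`. By the first fact, summing that
conditional density over the values on `B_j ∖ U'` gives `1`.
-/

section

variable {α : Type*} [DecidableEq α]

section Marginals

variable {S T U : Finset α}

theorem marg_ne_zero_of_pos (h : S ⊆ T) {φ : (↥T → Bool) → ℝ} (hφ : ∀ f, 0 < φ f)
    (g : ↥S → Bool) : marg h φ g ≠ 0 := by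
  let extension : ↥T → Bool := fun x => if hx : x.1 ∈ S then g ⟨x.1, hx⟩ else false
  have res_extension : res h extension = g := by
    funext x
    simp [res, extension]
  refine (Finset.sum_pos' (fun f _ => ?_) ⟨extension, Finset.mem_univ _, ?_⟩).ne'
  · split_ifs
    exacts [(hφ f).le, le_rfl]
  · simpa only [res_extension, if_true] using hφ extension

theorem marg_mul_comp_res (h : S ⊆ T) (φ : (↥T → Bool) → ℝ) (w : (↥S → Bool) → ℝ)
    (g : ↥S → Bool) :
    marg h (fun f => φ f * w (res h f)) g = marg h φ g * w g := by
  simp only [marg, Finset.sum_mul]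
  refine Finset.sum_congr rfl fun f _ => ?_
  split_ifs with hf
  · rw [hf]
  · rw [zero_mul]

-- An extension of `g` to `U` is the same as an assignment of `T` agreeing with `g` on `T ∩ S`.
theorem marg_comp_res (hS : S ⊆ U) (hT : T ⊆ U) (hcover : U ⊆ S ∪ T) (φ : (↥T → Bool) → ℝ)
    (g : ↥S → Bool) :
    marg hS (fun f => φ (res hT f)) g =
      marg (Finset.inter_subset_left : T ∩ S ⊆ T) φ (res Finset.inter_subset_right g) := by
  let glue (h : ↥T → Bool) : ↥U → Bool := fun x =>
    if hx : x.1 ∈ S then g ⟨x.1, hx⟩ else if hx : x.1 ∈ T then h ⟨x.1, hx⟩ else false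
  simp only [marg, ← Finset.sum_filter]
  refine Finset.sum_bij' (fun f _ => res hT f) (fun h _ => glue h) ?_ ?_ ?_ ?_ fun _ _ => rfl <;>
    simp only [Finset.mem_filter, Finset.mem_univ, true_and]
  · rintro f rfl
    rfl
  · intro h _
    funext x
    simp [res, glue]
  · rintro f rfl
    funext x
    rcases Finset.mem_union.mp (hcover x.2) with hx | hx <;> simp [res, glue, hx]
  · intro h hh
    funext x
    by_cases hx : x.1 ∈ S
    · have hagree := congrFun hh ⟨x.1, Finset.mem_inter.mpr ⟨x.2, hx⟩⟩
      simp only [res] at hagree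
      simp [res, glue, hx, hagree]
    · simp [res, glue, hx]

theorem marg_res_congr {I J : Finset α} (hIJ : I = J) (hI : I ⊆ T) (hJ : J ⊆ T) (hIU : I ⊆ U)
    (hJU : J ⊆ U) (φ : (↥T → Bool) → ℝ) (f : ↥U → Bool) :
    marg hI φ (res hIU f) = marg hJ φ (res hJU f) := by
  subst hIJ
  rfl

end Marginals

section Conditionals

variable {ι : Type*} (B : ι → Finset α) (μ : ∀ i, (↥(B i) → Bool) → ℝ) {U' U : Finset α}

/-- The conditional probability under `μ k` of the restriction of `f` to `B k`, given its values
on `B k ∩ B l`; it is `0` where the conditioning event has probability `0`. The sequential-sampling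
density is a product of such factors. -/
noncomputable def condDensity (k l : ι) (hk : B k ⊆ U) (f : ↥U → Bool) : ℝ :=
  μ k (res hk f) / marg (Finset.inter_subset_left : B k ∩ B l ⊆ B k) (μ k)
    (res (Finset.inter_subset_left.trans hk) f)

theorem condDensity_res_congr {k k' l l' : ι} (hkk' : k = k') (hinter : B k ∩ B l = B k ∩ B l')
    (hU : U' ⊆ U) (hk : B k ⊆ U') (hk' : B k' ⊆ U) (f : ↥U → Bool) :
    condDensity B μ k l hk (res hU f) = condDensity B μ k' l' hk' f := by
  subst hkk'
  exact congrArg (μ k (res hk' f) / ·) (marg_res_congr hinter _ _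
    (Finset.inter_subset_left.trans hk') (Finset.inter_subset_left.trans hk') (μ k) f)

-- The denominator only depends on the restriction to `U'`, so it factors out of the marginal.
theorem marg_condDensity_eq_one {k l : ι} (hU : U' ⊆ U) (hk : B k ⊆ U) (hcover : U ⊆ U' ∪ B k)
    (hinter : B k ∩ U' = B k ∩ B l)
    (hmarg : ∀ g, marg (Finset.inter_subset_left : B k ∩ B l ⊆ B k) (μ k) g ≠ 0)
    (g : ↥U' → Bool) :
    marg hU (condDensity B μ k l hk) g = 1 := by
  have hl : B k ∩ B l ⊆ U' := hinter ▸ Finset.inter_subset_right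
  calc marg hU (condDensity B μ k l hk) g
      = marg hU (fun f => μ k (res hk f)) g * (marg _ (μ k) (res hl g))⁻¹ :=
        marg_mul_comp_res hU (fun f => μ k (res hk f))
          (fun h => (marg Finset.inter_subset_left (μ k) (res hl h))⁻¹) g
    _ = marg Finset.inter_subset_left (μ k) (res hl g) * (marg _ (μ k) (res hl g))⁻¹ := by
        rw [marg_comp_res hU hk hcover, marg_res_congr hinter]
    _ = 1 := mul_inv_cancel₀ (hmarg _)

end Conditionals

theorem inter_eq_inter_of_interval {ι : Type*} [Preorder ι] {B : ι → Finset α}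
    (hint : ∀ i k j : ι, i ≤ k → k ≤ j → B i ∩ B j ⊆ B k) {a b c : ι} (hab : a ≤ b) (hbc : b ≤ c)
    (hred : B b ∩ B c ⊆ B a) : B c ∩ B a = B c ∩ B b := by
  have hac := hint a b c hab hbc
  grind

theorem biUnion_subset_biUnion_succAbove_union {n : ℕ} (B : Fin (n + 1) → Finset α)
    (p : Fin (n + 1)) :
    Finset.univ.biUnion B ⊆ Finset.univ.biUnion (fun i => B (p.succAbove i)) ∪ B p := by
  rw [Finset.biUnion_subset]
  intro k _
  rcases eq_or_ne k p with rfl | hkp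
  · exact Finset.subset_union_right
  · obtain ⟨i, rfl⟩ := Fin.exists_succAbove_eq hkp
    exact (Finset.subset_biUnion_of_mem (fun i => B (p.succAbove i))
      (Finset.mem_univ i)).trans Finset.subset_union_left

-- With `q = j - 2`, the bags `B_{j-1}`, `B_j`, `B_{j+1}` sit at the zero-based positions
-- `q.castSucc.castSucc`, `q.castSucc.succ`, `q.succ.succ`.
theorem inter_biUnion_succAbove_eq_inter {m : ℕ} {B : Fin (m + 2) → Finset α}
    (hint : ∀ i k j : Fin (m + 2), i ≤ k → k ≤ j → B i ∩ B j ⊆ B k) (q : Fin m)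
    (hred : B q.castSucc.succ ∩ B q.succ.succ ⊆ B q.castSucc.castSucc) :
    B q.castSucc.succ ∩ Finset.univ.biUnion (fun i => B (q.castSucc.succ.succAbove i)) =
      B q.castSucc.succ ∩ B q.castSucc.castSucc := by
  apply Finset.Subset.antisymm
  · rw [Finset.inter_biUnion, Finset.biUnion_subset]
    intro i _
    refine Finset.subset_inter Finset.inter_subset_left ?_
    rcases lt_or_gt_of_ne (Fin.succAbove_ne q.castSucc.succ i) with hlt | hgt
    · rw [Finset.inter_comm]
      exact hint _ _ _ (Fin.le_castSucc_iff.mpr hlt) Fin.castSucc_lt_succ.le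
    · have hnext : B q.castSucc.succ ∩ B (q.castSucc.succ.succAbove i) ⊆ B q.succ.succ :=
        hint _ _ _ (Fin.succ_le_succ_iff.mpr Fin.castSucc_lt_succ.le)
          (Fin.castSucc_lt_iff_succ_le.mp hgt)
      exact (Finset.subset_inter Finset.inter_subset_left hnext).trans hred
  · refine Finset.inter_subset_inter_left ?_
    have hprev := Finset.subset_biUnion_of_mem (fun i => B (q.castSucc.succ.succAbove i))
      (Finset.mem_univ q.castSucc)
    rwa [Fin.succAbove_succ_self] at hprev

theorem succ_succAbove_of_ne {n : ℕ} {p i : Fin n} (h : i ≠ p) :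
    p.succ.succAbove i = p.castSucc.succAbove i := by
  rcases h.lt_or_gt with hlt | hgt
  · rw [Fin.succAbove_succ_of_le _ _ hlt.le, Fin.succAbove_castSucc_of_lt _ _ hlt]
  · rw [Fin.succAbove_succ_of_lt _ _ hgt, Fin.succAbove_castSucc_of_le _ _ hgt.le]

theorem skipIdx_eq_succAbove {n : ℕ} (p : Fin (n + 1)) : skipIdx (n + 1) p = p.succAbove :=
  rfl

theorem seqDensity_succ {n : ℕ} (B : Fin (n + 1) → Finset α)
    (μ : ∀ i, (↥(B i) → Bool) → ℝ) (f : ↥(Finset.univ.biUnion B) → Bool) :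
    seqDensity (n + 1) B μ f =
      μ 0 (res (Finset.subset_biUnion_of_mem B (Finset.mem_univ 0)) f) *
        ∏ i : Fin n, condDensity B μ i.succ i.castSucc
          (Finset.subset_biUnion_of_mem B (Finset.mem_univ i.succ)) f :=
  Fin.prod_univ_succ _

theorem seqDensity_eq_condDensity_mul_seqDensity_succAbove {m : ℕ} {B : Fin (m + 2) → Finset α}
    (μ : ∀ i, (↥(B i) → Bool) → ℝ) (q : Fin m)
    (hinter : B q.succ.succ ∩ B q.castSucc.castSucc = B q.succ.succ ∩ B q.castSucc.succ)
    (hsub : Finset.univ.biUnion (fun i => B (q.castSucc.succ.succAbove i)) ⊆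
      Finset.univ.biUnion B)
    (f : ↥(Finset.univ.biUnion B) → Bool) :
    seqDensity (m + 2) B μ f =
      condDensity B μ q.castSucc.succ q.castSucc.castSucc
          (Finset.subset_biUnion_of_mem B (Finset.mem_univ _)) f *
        seqDensity (m + 1) (fun i => B (q.castSucc.succ.succAbove i))
          (fun i => μ (q.castSucc.succ.succAbove i)) (res hsub f) := by
  rw [seqDensity_succ, seqDensity_succ, Fin.prod_univ_succAbove _ q.castSucc, mul_left_comm]
  congr 2
  refine Finset.prod_congr rfl fun i _ => Eq.symm ?_
  refine condDensity_res_congr B μ (Fin.succ_succAbove_succ _ i) ?_ hsub _ _ f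
  rcases eq_or_ne i q with rfl | hiq
  · rw [Fin.succAbove_succ_self, Fin.succ_succAbove_succ, Fin.succAbove_castSucc_self]
    exact hinter
  · rw [Fin.succ_castSucc, Fin.castSucc_succAbove_castSucc, succ_succAbove_of_ne hiq]

theorem stmt8_general (ℓ j : ℕ) (hj2 : 2 ≤ j) (hjl : j ≤ ℓ - 1)
    (B : Fin ℓ → Finset α)
    (hint : ∀ i k j' : Fin ℓ, i ≤ k → k ≤ j' → B i ∩ B j' ⊆ B k)
    (μ : ∀ i, (↥(B i) → Bool) → ℝ)
    (hmarg : ∀ i k : Fin ℓ, (k : ℕ) + 1 = i → ∀ g,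
      marg (Finset.inter_subset_left : B i ∩ B k ⊆ B i) (μ i) g ≠ 0)
    (hred : B ⟨j - 1, by omega⟩ ∩ B ⟨j, by omega⟩ ⊆ B ⟨j - 2, by omega⟩)
    (hsub : Finset.univ.biUnion (fun i => B (skipIdx ℓ (j - 1) i)) ⊆ Finset.univ.biUnion B)
    (g : ↥(Finset.univ.biUnion (fun i => B (skipIdx ℓ (j - 1) i))) → Bool) :
    seqDensity (ℓ - 1) (fun i => B (skipIdx ℓ (j - 1) i))
        (fun i => μ (skipIdx ℓ (j - 1) i)) g
      = marg hsub (seqDensity ℓ B μ) g := by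
  obtain ⟨m, rfl⟩ : ∃ m, ℓ = m + 2 := ⟨ℓ - 2, by omega⟩
  obtain ⟨q, rfl⟩ : ∃ q : Fin m, j = q + 2 := ⟨⟨j - 2, by omega⟩, by grind⟩
  revert hsub g
  rw [show skipIdx (m + 2) (q + 2 - 1) = q.castSucc.succ.succAbove from
    skipIdx_eq_succAbove q.castSucc.succ]
  intro hsub g
  have hinter : B q.succ.succ ∩ B q.castSucc.castSucc = B q.succ.succ ∩ B q.castSucc.succ :=
    inter_eq_inter_of_interval hint Fin.castSucc_lt_succ.le
      (Fin.succ_le_succ_iff.mpr Fin.castSucc_lt_succ.le) hred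
  rw [funext (seqDensity_eq_condDensity_mul_seqDensity_succAbove μ q hinter hsub),
    marg_mul_comp_res,
    marg_condDensity_eq_one B μ hsub _ (biUnion_subset_biUnion_succAbove_union B _)
      (inter_biUnion_succAbove_eq_inter hint q hred) (hmarg _ _ rfl), one_mul]
  rfl

end

theorem stmt8 (ℓ : ℕ) (hℓ : 3 ≤ ℓ)
    (j : ℕ) (hj2 : 2 ≤ j) (hjl : j ≤ ℓ - 1)
    (B : Fin ℓ → Finset V)
    -- the bags are nonempty
    (hne : ∀ i, (B i).Nonempty)
    -- the interval property
    (hint : ∀ i k j' : Fin ℓ, i ≤ k → k ≤ j' → B i ∩ B j' ⊆ B k)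
    (μ : ∀ i, (↥(B i) → Bool) → ℝ)
    -- each μ i is a probability distribution assigning positive probability
    -- to every assignment
    (hpos : ∀ i g, 0 < μ i g)
    (hprob : ∀ i, ∑ g : ↥(B i) → Bool, μ i g = 1)
    -- consistency: the marginals of μ i and μ j' on B i ∩ B j' coincide
    (hcons : ∀ i j' : Fin ℓ,
      marg (Finset.inter_subset_left : B i ∩ B j' ⊆ B i) (μ i) =
      marg (Finset.inter_subset_right : B i ∩ B j' ⊆ B j') (μ j'))
    -- B_j ∩ B_{j+1} ⊆ B_{j-1}  (in `Fin ℓ` indexing: B ⟨j-1⟩ ∩ B ⟨j⟩ ⊆ B ⟨j-2⟩)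
    (hred : B ⟨j - 1, by omega⟩ ∩ B ⟨j, by omega⟩ ⊆ B ⟨j - 2, by omega⟩)
    -- U' ⊆ U
    (hsub : Finset.univ.biUnion (fun i => B (skipIdx ℓ (j - 1) i)) ⊆ Finset.univ.biUnion B) :
    ∀ g : ↥(Finset.univ.biUnion (fun i => B (skipIdx ℓ (j - 1) i))) → Bool,
      seqDensity (ℓ - 1) (fun i => B (skipIdx ℓ (j - 1) i))
          (fun i => μ (skipIdx ℓ (j - 1) i)) g
        = marg hsub (seqDensity ℓ B μ) g := by
  exact stmt8_general ℓ j hj2 hjl B hint μ (fun i _ _ => marg_ne_zero_of_pos _ (hpos i)) hred hsub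
end

section
/- Under the layered chain setup, suppose additionally that S_ℓ = {t_0, t_1} with Pr[X_ℓ = t_0] = Pr[X_ℓ = t_1] = 1/2, and that A(t_1) < 0. Define the edge set C to consist of all triples (i, u, v) with u ∈ S_i, v ∈ S_{i+1}, and either w(u, v) = 0 or (Pr[X_i = u] > 0, Pr[X_{i+1} = v] > 0 and |A(u) − A(v)| > 1/(2ℓ)). Then: (a) for every sequence v_0 = s_0, v_1 ∈ S_1, …, v_{ℓ−1} ∈ S_{ℓ−1}, v_ℓ = t_1, some consecutive pair (i, v_i, v_{i+1}) belongs to C (so C is an s_0–t_1 cut); and (b) the total weight of C satisfies Σ_{(i,u,v) ∈ C} w(u, v) ≤ 8 ℓ² · Pr[X_0 = s_0 ∧ X_ℓ = t_1]. -/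
/-!
STATEMENT 12: Under the layered chain setup, with S_ℓ = {t_0, t_1},
Pr[X_ℓ = t_0] = Pr[X_ℓ = t_1] = 1/2 and A(t_1) < 0, the set C of edges that either
have zero weight or have A-gap greater than 1/(2ℓ) is an s_0–t_1 cut, and its total
weight is at most 8ℓ² · Pr[X_0 = s_0 ∧ X_ℓ = t_1].
-/

open Classical in
/-- Probability of the event `A` under the finitely-supported distribution `p`. -/
noncomputable def prE {Ω : Type*} [Fintype Ω] (p : Ω → ℝ) (A : Ω → Prop) : ℝ :=
  ∑ ω, if A ω then p ω else 0

/-- Expectation of `f` under the finitely-supported distribution `p`. -/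
noncomputable def expE {Ω : Type*} [Fintype Ω] (p : Ω → ℝ) (f : Ω → ℝ) : ℝ :=
  ∑ ω, p ω * f ω

/-- Variance of `f` under the finitely-supported distribution `p`. -/
noncomputable def varE {Ω : Type*} [Fintype Ω] (p : Ω → ℝ) (f : Ω → ℝ) : ℝ :=
  expE p fun ω => (f ω - expE p f) ^ 2

/-- Conditional probability `Pr[A | B]` under `p`. -/
noncomputable def cprE {Ω : Type*} [Fintype Ω] (p : Ω → ℝ) (A B : Ω → Prop) : ℝ :=
  prE p (fun ω => A ω ∧ B ω) / prE p B

/-- `Aval p A0 Xi v = Pr[A0 | Xi = v] − 1/2`. -/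
noncomputable def Aval {Ω σ : Type*} [Fintype Ω] (p : Ω → ℝ) (A0 : Ω → Prop)
    (Xi : Ω → σ) (v : σ) : ℝ :=
  cprE p A0 (fun ω => Xi ω = v) - 1 / 2

/-!
For the event `E = {X₀ = s₀}`, let `cᵢ = Pr[E | Xᵢ]` and consider the mean `𝔼[cᵢ (1 - cᵢ)]` of the
conditional variance of the indicator of `E`, which is `1/4 - φ(i)` when `Pr[E] = 1/2`. By
conditional independence `cᵢ₊₁` is the projection of `cᵢ`, so this mean grows by exactly
`𝔼[(cᵢ - cᵢ₊₁)²]` at step `i`, to which an edge of gap more than `δ` contributes at least `δ²` times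
its weight. Since `c (1 - c) ≤ min c (1 - c)`, the final value is at most
`Pr[E, X_ℓ = t₁] + Pr[¬E, X_ℓ ≠ t₁]`, whose second summand is at most the first as soon as
`Pr[E] + Pr[X_ℓ = t₁] ≥ 1`. The cut property is a telescoping sum: `A` falls from `1/2` to a
negative value in `ℓ` steps.
-/

section Probability

variable {Ω σ : Type*} [Fintype Ω] {p : Ω → ℝ} {A B : Ω → Prop}

lemma prE_nonneg (hp : ∀ ω, 0 ≤ p ω) (A : Ω → Prop) : 0 ≤ prE p A :=
  Finset.sum_nonneg fun ω _ => by split_ifs <;> simp [hp]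

lemma prE_mono (hp : ∀ ω, 0 ≤ p ω) (hAB : ∀ ω, A ω → B ω) : prE p A ≤ prE p B := by
  refine Finset.sum_le_sum fun ω _ => ?_
  by_cases hA : A ω
  · simp [hA, hAB ω hA]
  · rw [if_neg hA]
    split_ifs <;> simp [hp]

lemma prE_eq_zero_of_imp (hp : ∀ ω, 0 ≤ p ω) (hAB : ∀ ω, A ω → B ω) (hB : prE p B = 0) :
    prE p A = 0 :=
  le_antisymm (hB ▸ prE_mono hp hAB) (prE_nonneg hp A)

lemma eq_zero_of_prE_eq_zero (hp : ∀ ω, 0 ≤ p ω) (hA : prE p A = 0) {ω : Ω} (hω : A ω) :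
    p ω = 0 := by
  classical
  have hterm := (Finset.sum_eq_zero_iff_of_nonneg fun ω _ => by split_ifs <;> simp [hp]).1 hA
    ω (Finset.mem_univ ω)
  rwa [if_pos hω] at hterm

lemma prE_and_add_prE_and_not (p : Ω → ℝ) (A B : Ω → Prop) :
    prE p (fun ω => A ω ∧ B ω) + prE p (fun ω => A ω ∧ ¬B ω) = prE p A := by
  simp only [prE, ← Finset.sum_add_distrib]
  refine Finset.sum_congr rfl fun ω _ => ?_
  by_cases hA : A ω <;> by_cases hB : B ω <;> simp [hA, hB]

lemma prE_add_prE_not (p : Ω → ℝ) (A : Ω → Prop) :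
    prE p A + prE p (fun ω => ¬A ω) = ∑ ω, p ω := by
  have hsplit := prE_and_add_prE_and_not p (fun _ => True) A
  simp only [true_and] at hsplit
  simpa [prE] using hsplit

lemma prE_not_and_not_le_prE_and (h : ∑ ω, p ω ≤ prE p A + prE p B) :
    prE p (fun ω => ¬A ω ∧ ¬B ω) ≤ prE p (fun ω => A ω ∧ B ω) := by
  have hA := prE_add_prE_not p A
  have hAB := prE_and_add_prE_and_not p B A
  have hA'B := prE_and_add_prE_and_not p (fun ω => ¬A ω) B
  simp only [and_comm (a := B _)] at hAB
  linarith

lemma prE_and_eq_cprE_mul_prE (hp : ∀ ω, 0 ≤ p ω) (A B : Ω → Prop) :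
    prE p (fun ω => A ω ∧ B ω) = cprE p A B * prE p B :=
  (div_mul_cancel_of_imp (prE_eq_zero_of_imp hp fun _ => And.right)).symm

lemma prE_not_and_eq_one_sub_cprE_mul_prE (hp : ∀ ω, 0 ≤ p ω) (A B : Ω → Prop) :
    prE p (fun ω => ¬A ω ∧ B ω) = (1 - cprE p A B) * prE p B := by
  have hsplit := prE_and_add_prE_and_not p B A
  simp only [and_comm (a := B _)] at hsplit
  rw [sub_mul, one_mul, ← prE_and_eq_cprE_mul_prE hp, ← hsplit, add_sub_cancel_left]

lemma cprE_nonneg (hp : ∀ ω, 0 ≤ p ω) (A B : Ω → Prop) : 0 ≤ cprE p A B :=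
  div_nonneg (prE_nonneg hp _) (prE_nonneg hp B)

lemma cprE_le_one (hp : ∀ ω, 0 ≤ p ω) (A B : Ω → Prop) : cprE p A B ≤ 1 :=
  div_le_one_of_le₀ (prE_mono hp fun _ => And.right) (prE_nonneg hp B)

lemma Aval_of_prE_pos {Y : Ω → σ} {s : σ} (hs : 0 < prE p fun ω => Y ω = s) :
    Aval p (fun ω => Y ω = s) Y s = 1 / 2 := by
  simp only [Aval, cprE, and_self, div_self hs.ne']
  norm_num

lemma expE_mono (hp : ∀ ω, 0 ≤ p ω) {f g : Ω → ℝ} (hfg : ∀ ω, f ω ≤ g ω) :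
    expE p f ≤ expE p g :=
  Finset.sum_le_sum fun ω _ => mul_le_mul_of_nonneg_left (hfg ω) (hp ω)

lemma expE_add (p f g : Ω → ℝ) : expE p (fun ω => f ω + g ω) = expE p f + expE p g := by
  simp only [expE, mul_add, Finset.sum_add_distrib]

lemma expE_sub (p f g : Ω → ℝ) : expE p (fun ω => f ω - g ω) = expE p f - expE p g := by
  simp only [expE, mul_sub, Finset.sum_sub_distrib]

open Classical in
lemma sum_mul_prE_and_eq_expE_ite {T : Finset σ} {Y : Ω → σ} (hT : ∀ ω, Y ω ∈ T) (p : Ω → ℝ)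
    (A : Ω → Prop) (g : σ → ℝ) :
    ∑ v ∈ T, g v * prE p (fun ω => A ω ∧ Y ω = v)
      = expE p fun ω => if A ω then g (Y ω) else 0 := by
  simp only [prE, expE, Finset.mul_sum]
  rw [Finset.sum_comm]
  refine Finset.sum_congr rfl fun ω _ => ?_
  by_cases hA : A ω <;> simp [hA, hT, mul_comm]

lemma sum_mul_prE_eq_expE {T : Finset σ} {Y : Ω → σ} (hT : ∀ ω, Y ω ∈ T) (p : Ω → ℝ)
    (g : σ → ℝ) :
    ∑ v ∈ T, g v * prE p (fun ω => Y ω = v) = expE p fun ω => g (Y ω) := by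
  simpa only [true_and, if_true] using sum_mul_prE_and_eq_expE_ite hT p (fun _ => True) g

open Classical in
lemma expE_ite_eq_expE_mul_of_prE_and_eq {Y : Ω → σ} {c : σ → ℝ}
    (hc : ∀ v, prE p (fun ω => A ω ∧ Y ω = v) = c v * prE p fun ω => Y ω = v) (g : σ → ℝ) :
    (expE p fun ω => if A ω then g (Y ω) else 0) = expE p fun ω => g (Y ω) * c (Y ω) := by
  have hT (ω : Ω) : Y ω ∈ Finset.univ.image Y := Finset.mem_image_of_mem Y (Finset.mem_univ ω)
  rw [← sum_mul_prE_and_eq_expE_ite hT, ← sum_mul_prE_eq_expE hT p fun v => g v * c v]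
  simp only [hc, mul_assoc]

open Classical in
lemma prE_and_eq_expE_ite_of_prE_and_eq {Y : Ω → σ} {c : σ → ℝ}
    (hc : ∀ v, prE p (fun ω => A ω ∧ Y ω = v) = c v * prE p fun ω => Y ω = v) (T : σ → Prop) :
    prE p (fun ω => A ω ∧ T (Y ω)) = expE p fun ω => if T (Y ω) then c (Y ω) else 0 := by
  have htower := expE_ite_eq_expE_mul_of_prE_and_eq hc fun v => if T v then 1 else 0
  simp only [ite_mul, one_mul, zero_mul] at htower
  rw [← htower, prE, expE]
  refine Finset.sum_congr rfl fun ω _ => ?_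
  by_cases hA : A ω <;> simp [hA]

open Classical in
lemma expE_ite_eq_expE_mul_cprE (hp : ∀ ω, 0 ≤ p ω) (A : Ω → Prop) (Y : Ω → σ) (g : σ → ℝ) :
    (expE p fun ω => if A ω then g (Y ω) else 0)
      = expE p fun ω => g (Y ω) * cprE p A fun ω' => Y ω' = Y ω :=
  expE_ite_eq_expE_mul_of_prE_and_eq (fun _ => prE_and_eq_cprE_mul_prE hp A _) g

end Probability

section ConditionalVariance

variable {Ω σ τ : Type*} [Fintype Ω] {p : Ω → ℝ} {E : Ω → Prop} {Y : Ω → σ} {Z : Ω → τ}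

/-- The event `E` and the random variable `Z` are conditionally independent given `Y`, written
without division so that null values of `Y` impose no condition. -/
def CondIndepEvent (p : Ω → ℝ) (E : Ω → Prop) (Z : Ω → τ) (Y : Ω → σ) : Prop :=
  ∀ (b : τ) (c : σ),
    prE p (fun ω => E ω ∧ Z ω = b ∧ Y ω = c) * prE p (fun ω => Y ω = c)
      = prE p (fun ω => E ω ∧ Y ω = c) * prE p (fun ω => Z ω = b ∧ Y ω = c)

/-- The mean conditional variance `𝔼[Var(1_E | Y)]` of the indicator of `E` given `Y`, through the
formula `c (1 - c)` for the variance of a Bernoulli variable. It is the quantity that increases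
along the chain. -/
noncomputable def meanCondVar (p : Ω → ℝ) (E : Ω → Prop) (Y : Ω → σ) : ℝ :=
  expE p fun ω => cprE p E (fun ω' => Y ω' = Y ω) * (1 - cprE p E fun ω' => Y ω' = Y ω)

lemma Aval_sub_Aval (p : Ω → ℝ) (E : Ω → Prop) (Y : Ω → σ) (Z : Ω → τ) (u : σ) (v : τ) :
    Aval p E Y u - Aval p E Z v = cprE p E (fun ω => Y ω = u) - cprE p E (fun ω => Z ω = v) :=
  sub_sub_sub_cancel_right _ _ _

lemma meanCondVar_nonneg (hp : ∀ ω, 0 ≤ p ω) (E : Ω → Prop) (Y : Ω → σ) :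
    0 ≤ meanCondVar p E Y :=
  Finset.sum_nonneg fun ω _ => mul_nonneg (hp ω) <|
    mul_nonneg (cprE_nonneg hp _ _) (sub_nonneg.2 (cprE_le_one hp _ _))

lemma CondIndepEvent.prE_and_eq_cprE_mul (hci : CondIndepEvent p E Z Y) (hp : ∀ ω, 0 ≤ p ω)
    (b : τ) (c : σ) :
    prE p (fun ω => E ω ∧ Z ω = b ∧ Y ω = c)
      = cprE p E (fun ω => Y ω = c) * prE p (fun ω => Z ω = b ∧ Y ω = c) := by
  by_cases hY : prE p (fun ω => Y ω = c) = 0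
  · rw [prE_eq_zero_of_imp hp (fun _ h => h.2.2) hY, prE_eq_zero_of_imp hp (fun _ h => h.2) hY,
      mul_zero]
  · rw [cprE, div_mul_eq_mul_div, eq_div_iff hY, hci b c]

lemma CondIndepEvent.expE_mul_cprE_eq (hci : CondIndepEvent p E Z Y) (hp : ∀ ω, 0 ≤ p ω)
    (g : τ → ℝ) :
    (expE p fun ω => g (Z ω) * cprE p E fun ω' => Z ω' = Z ω)
      = expE p fun ω => g (Z ω) * cprE p E fun ω' => Y ω' = Y ω := by
  rw [← expE_ite_eq_expE_mul_cprE hp]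
  exact expE_ite_eq_expE_mul_of_prE_and_eq (Y := fun ω => (Z ω, Y ω))
    (c := fun w => cprE p E fun ω => Y ω = w.2)
    (fun w => by simpa only [Prod.ext_iff] using hci.prE_and_eq_cprE_mul hp w.1 w.2)
    (fun w => g w.1)

lemma CondIndepEvent.expE_sq_Aval_sub (hci : CondIndepEvent p E Z Y) (hp : ∀ ω, 0 ≤ p ω) :
    (expE p fun ω => (Aval p E Y (Y ω) - Aval p E Z (Z ω)) ^ 2)
      = meanCondVar p E Z - meanCondVar p E Y := by
  let cY (ω : Ω) : ℝ := cprE p E fun ω' => Y ω' = Y ω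
  let cZ (ω : Ω) : ℝ := cprE p E fun ω' => Z ω' = Z ω
  have horth : (expE p fun ω => (1 - 2 * cZ ω) * cZ ω) = expE p fun ω => (1 - 2 * cZ ω) * cY ω :=
    hci.expE_mul_cprE_eq hp fun v => 1 - 2 * cprE p E fun ω => Z ω = v
  calc (expE p fun ω => (Aval p E Y (Y ω) - Aval p E Z (Z ω)) ^ 2)
      = expE p fun ω => cZ ω * (1 - cZ ω) - cY ω * (1 - cY ω)
          - ((1 - 2 * cZ ω) * cZ ω - (1 - 2 * cZ ω) * cY ω) := by
        congr 1 with ω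
        rw [Aval_sub_Aval]
        ring
    _ = meanCondVar p E Z - meanCondVar p E Y := by
        rw [expE_sub, expE_sub, expE_sub, horth, sub_self, sub_zero, meanCondVar, meanCondVar]

open Classical in
lemma CondIndepEvent.sq_mul_sum_prE_le [Fintype σ] [Fintype τ] (hci : CondIndepEvent p E Z Y)
    (hp : ∀ ω, 0 ≤ p ω) {δ : ℝ} (hδ : 0 ≤ δ) {C : σ → τ → Prop}
    (hC : ∀ u v, C u v →
      prE p (fun ω => Y ω = u ∧ Z ω = v) = 0 ∨ δ < |Aval p E Y u - Aval p E Z v|) :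
    δ ^ 2 * ∑ u, ∑ v, (if C u v then prE p (fun ω => Y ω = u ∧ Z ω = v) else 0)
      ≤ meanCondVar p E Z - meanCondVar p E Y := by
  have hsum := sum_mul_prE_eq_expE (fun ω => Finset.mem_univ (Y ω, Z ω)) p
    fun w => if C w.1 w.2 then 1 else 0
  simp only [Fintype.sum_prod_type, Prod.mk.injEq, ite_mul, one_mul, zero_mul] at hsum
  rw [hsum, ← hci.expE_sq_Aval_sub hp, expE, expE, Finset.mul_sum]
  refine Finset.sum_le_sum fun ω _ => ?_
  rw [mul_left_comm]
  by_cases hCω : C (Y ω) (Z ω)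
  · rcases hC _ _ hCω with hnull | hgap
    · simp [eq_zero_of_prE_eq_zero hp hnull (ω := ω) ⟨rfl, rfl⟩]
    · rw [if_pos hCω, mul_one, ← sq_abs (_ - _)]
      exact mul_le_mul_of_nonneg_left (pow_le_pow_left₀ hδ hgap.le 2) (hp ω)
  · rw [if_neg hCω, mul_zero, mul_zero]
    exact mul_nonneg (hp ω) (sq_nonneg _)

lemma meanCondVar_le_prE_add_prE (hp : ∀ ω, 0 ≤ p ω) (E : Ω → Prop) (Y : Ω → σ) (t : σ) :
    meanCondVar p E Y
      ≤ prE p (fun ω => E ω ∧ Y ω = t) + prE p (fun ω => ¬E ω ∧ ¬Y ω = t) := by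
  classical
  rw [prE_and_eq_expE_ite_of_prE_and_eq (fun _ => prE_and_eq_cprE_mul_prE hp E _) (· = t),
    prE_and_eq_expE_ite_of_prE_and_eq (fun _ => prE_not_and_eq_one_sub_cprE_mul_prE hp E _)
      (¬ · = t), ← expE_add]
  refine expE_mono hp fun ω => ?_
  have hnonneg := cprE_nonneg hp E fun ω' => Y ω' = Y ω
  have hle_one := cprE_le_one hp E fun ω' => Y ω' = Y ω
  by_cases hY : Y ω = t
  · rw [if_pos hY, if_neg (not_not.2 hY), add_zero]
    exact mul_le_of_le_one_right hnonneg (sub_le_self 1 hnonneg)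
  · rw [if_neg hY, if_pos hY, zero_add]
    exact mul_le_of_le_one_left (sub_nonneg.2 hle_one) hle_one

end ConditionalVariance

section Chain

variable {Ω : Type*} [Fintype Ω] {p : Ω → ℝ} {ℓ : ℕ} {S : ℕ → Type*} {X : ∀ i, Ω → S i}

lemma exists_lt_sub_succ_of_mul_lt {a : ℕ → ℝ} {δ : ℝ} (h : ℓ * δ < a 0 - a ℓ) :
    ∃ i < ℓ, δ < a i - a (i + 1) := by
  have hsum : ∑ _i ∈ Finset.range ℓ, δ < ∑ i ∈ Finset.range ℓ, (a i - a (i + 1)) := by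
    rwa [Finset.sum_range_sub', Finset.sum_const, Finset.card_range, nsmul_eq_mul]
  simpa using Finset.exists_lt_of_sum_lt hsum

lemma exists_prE_eq_zero_or_lt_abs_Aval_sub (hp : ∀ ω, 0 ≤ p ω) (hℓ : 0 < ℓ) {δ : ℝ}
    (v : ∀ i, S i) (hδ : ℓ * δ < 1 / 2 - Aval p (fun ω => X 0 ω = v 0) (X ℓ) (v ℓ)) :
    ∃ i < ℓ, prE p (fun ω => X i ω = v i ∧ X (i + 1) ω = v (i + 1)) = 0 ∨
      (0 < prE p (fun ω => X i ω = v i) ∧ 0 < prE p (fun ω => X (i + 1) ω = v (i + 1)) ∧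
        δ < |Aval p (fun ω => X 0 ω = v 0) (X i) (v i)
          - Aval p (fun ω => X 0 ω = v 0) (X (i + 1)) (v (i + 1))|) := by
  by_cases hnull : ∃ i < ℓ, prE p (fun ω => X i ω = v i ∧ X (i + 1) ω = v (i + 1)) = 0
  · obtain ⟨i, hi, hw⟩ := hnull
    exact ⟨i, hi, .inl hw⟩
  push Not at hnull
  have hedge (i : ℕ) (hi : i < ℓ) := (prE_nonneg hp _).lt_of_ne' (hnull i hi)
  have hleft (i : ℕ) (hi : i < ℓ) : 0 < prE p fun ω => X i ω = v i :=
    (hedge i hi).trans_le (prE_mono hp fun _ => And.left)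
  have hright (i : ℕ) (hi : i < ℓ) : 0 < prE p fun ω => X (i + 1) ω = v (i + 1) :=
    (hedge i hi).trans_le (prE_mono hp fun _ => And.right)
  rw [← Aval_of_prE_pos (hleft 0 hℓ)] at hδ
  obtain ⟨i, hi, hdrop⟩ := exists_lt_sub_succ_of_mul_lt
    (a := fun i => Aval p (fun ω => X 0 ω = v 0) (X i) (v i)) hδ
  exact ⟨i, hi, .inr ⟨hleft i hi, hright i hi, hdrop.trans_le (le_abs_self _)⟩⟩

open Classical in
lemma sq_mul_sum_prE_le_prE_add_prE [∀ i, Fintype (S i)] (hp : ∀ ω, 0 ≤ p ω) {E : Ω → Prop}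
    (hci : ∀ i < ℓ, CondIndepEvent p E (X (i + 1)) (X i)) {δ : ℝ} (hδ : 0 ≤ δ)
    {C : ∀ i, S i → S (i + 1) → Prop}
    (hC : ∀ i u v, C i u v → prE p (fun ω => X i ω = u ∧ X (i + 1) ω = v) = 0 ∨
      δ < |Aval p E (X i) u - Aval p E (X (i + 1)) v|) (t : S ℓ) :
    δ ^ 2 * ∑ i ∈ Finset.range ℓ, ∑ u : S i, ∑ v : S (i + 1),
        (if C i u v then prE p (fun ω => X i ω = u ∧ X (i + 1) ω = v) else 0)
      ≤ prE p (fun ω => E ω ∧ X ℓ ω = t) + prE p (fun ω => ¬E ω ∧ ¬X ℓ ω = t) := by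
  rw [Finset.mul_sum]
  calc _ ≤ ∑ i ∈ Finset.range ℓ, (meanCondVar p E (X (i + 1)) - meanCondVar p E (X i)) :=
        Finset.sum_le_sum fun i hi =>
          (hci i (Finset.mem_range.1 hi)).sq_mul_sum_prE_le hp hδ (hC i)
    _ = meanCondVar p E (X ℓ) - meanCondVar p E (X 0) :=
        Finset.sum_range_sub (fun i => meanCondVar p E (X i)) ℓ
    _ ≤ meanCondVar p E (X ℓ) := sub_le_self _ (meanCondVar_nonneg hp E _)
    _ ≤ _ := meanCondVar_le_prE_add_prE hp E (X ℓ) t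

end Chain

open Classical in
theorem stmt12_general {Ω : Type*} [Fintype Ω] (ℓ : ℕ) (hℓ : 1 ≤ ℓ)
    (S : ℕ → Type*) [∀ i, Fintype (S i)]
    (p : Ω → ℝ) (hp : ∀ ω, 0 ≤ p ω) (hsum : ∑ ω, p ω = 1)
    (X : ∀ i, Ω → S i) (s0 : S 0) (t1 : S ℓ)
    (hci : ∀ i < ℓ, CondIndepEvent p (fun ω => X 0 ω = s0) (X (i + 1)) (X i))
    (hst : 1 ≤ prE p (fun ω => X 0 ω = s0) + prE p (fun ω => X ℓ ω = t1))
    (hAt1 : Aval p (fun ω' => X 0 ω' = s0) (X ℓ) t1 < 0)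
    (C : ∀ i : ℕ, S i → S (i + 1) → Prop)
    (hC : ∀ (i : ℕ) (u : S i) (v : S (i + 1)),
      C i u v ↔ prE p (fun ω => X i ω = u ∧ X (i + 1) ω = v) = 0 ∨
        (0 < prE p (fun ω => X i ω = u) ∧ 0 < prE p (fun ω => X (i + 1) ω = v) ∧
          1 / (2 * (ℓ : ℝ)) < |Aval p (fun ω' => X 0 ω' = s0) (X i) u
            - Aval p (fun ω' => X 0 ω' = s0) (X (i + 1)) v|)) :
    (∀ v : ∀ i, S i, v 0 = s0 → v ℓ = t1 → ∃ i < ℓ, C i (v i) (v (i + 1)))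
    ∧ (∑ i ∈ Finset.range ℓ, ∑ u : S i, ∑ v : S (i + 1),
          (if C i u v then prE p (fun ω => X i ω = u ∧ X (i + 1) ω = v) else 0))
        ≤ 8 * (ℓ : ℝ) ^ 2 * prE p (fun ω => X 0 ω = s0 ∧ X ℓ ω = t1) := by
  have hℓ_pos : (0 : ℝ) < ℓ := Nat.cast_pos.2 hℓ
  constructor
  · rintro v rfl rfl
    have hdrop : ℓ * (1 / (2 * (ℓ : ℝ)))
        < 1 / 2 - Aval p (fun ω => X 0 ω = v 0) (X ℓ) (v ℓ) := by
      rw [one_div, mul_inv, mul_left_comm, mul_inv_cancel₀ hℓ_pos.ne']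
      linarith
    simpa only [hC] using exists_prE_eq_zero_or_lt_abs_Aval_sub hp hℓ v hdrop
  · have hweight := sq_mul_sum_prE_le_prE_add_prE hp hci (δ := 1 / (2 * (ℓ : ℝ)))
      (by positivity) (fun i u v h => ((hC i u v).1 h).imp_right fun h => h.2.2) t1
    have hmiss := prE_not_and_not_le_prE_and (hsum.trans_le hst)
    rw [one_div, inv_pow, inv_mul_le_iff₀ (by positivity)] at hweight
    calc _ ≤ (2 * (ℓ : ℝ)) ^ 2 * _ := hweight
      _ ≤ (2 * (ℓ : ℝ)) ^ 2 * (2 * prE p fun ω => X 0 ω = s0 ∧ X ℓ ω = t1) := by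
        rw [two_mul (prE p _)]
        gcongr
      _ = _ := by ring

open Classical in
theorem stmt12 {Ω : Type*} [Fintype Ω] (ℓ : ℕ) (hℓ : 1 ≤ ℓ)
    (S : ℕ → Type*) [∀ i, Fintype (S i)]
    -- a finite probability space
    (p : Ω → ℝ) (hp : ∀ ω, 0 ≤ p ω) (hsum : ∑ ω, p ω = 1)
    (X : ∀ i, Ω → S i)
    -- X_0 and X_{i+1} are conditionally independent given X_i
    (hci : ∀ i < ℓ, ∀ (a : S 0) (b : S (i + 1)) (c : S i),
      prE p (fun ω => X 0 ω = a ∧ X (i + 1) ω = b ∧ X i ω = c)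
          * prE p (fun ω => X i ω = c)
        = prE p (fun ω => X 0 ω = a ∧ X i ω = c)
          * prE p (fun ω => X (i + 1) ω = b ∧ X i ω = c))
    (s0 s1 : S 0) (hs : s0 ≠ s1) (hX0 : ∀ ω, X 0 ω = s0 ∨ X 0 ω = s1)
    (h0 : prE p (fun ω => X 0 ω = s0) = 1 / 2)
    (h1 : prE p (fun ω => X 0 ω = s1) = 1 / 2)
    -- S_ℓ = {t_0, t_1} with Pr[X_ℓ = t_0] = Pr[X_ℓ = t_1] = 1/2
    (t0 t1 : S ℓ) (ht : t0 ≠ t1) (hXl : ∀ ω, X ℓ ω = t0 ∨ X ℓ ω = t1)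
    (hl0 : prE p (fun ω => X ℓ ω = t0) = 1 / 2)
    (hl1 : prE p (fun ω => X ℓ ω = t1) = 1 / 2)
    -- A(t_1) < 0
    (hAt1 : Aval p (fun ω' => X 0 ω' = s0) (X ℓ) t1 < 0)
    -- the edge set C
    (C : ∀ i : ℕ, S i → S (i + 1) → Prop)
    (hC : ∀ (i : ℕ) (u : S i) (v : S (i + 1)),
      C i u v ↔ prE p (fun ω => X i ω = u ∧ X (i + 1) ω = v) = 0 ∨
        (0 < prE p (fun ω => X i ω = u) ∧ 0 < prE p (fun ω => X (i + 1) ω = v) ∧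
          1 / (2 * (ℓ : ℝ)) < |Aval p (fun ω' => X 0 ω' = s0) (X i) u
            - Aval p (fun ω' => X 0 ω' = s0) (X (i + 1)) v|)) :
    -- (a) C is an s_0–t_1 cut
    (∀ v : ∀ i, S i, v 0 = s0 → v ℓ = t1 → ∃ i < ℓ, C i (v i) (v (i + 1)))
    -- (b) the total weight of C is at most 8ℓ²·Pr[X_0 = s_0 ∧ X_ℓ = t_1]
    ∧ (∑ i ∈ Finset.range ℓ, ∑ u : S i, ∑ v : S (i + 1),
          (if C i u v then prE p (fun ω => X i ω = u ∧ X (i + 1) ω = v) else 0))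
        ≤ 8 * (ℓ : ℝ) ^ 2 * prE p (fun ω => X 0 ω = s0 ∧ X ℓ ω = t1) := by
  exact stmt12_general ℓ hℓ S p hp hsum X s0 t1 (fun i hi => hci i hi s0) (by norm_num [h0, hl1])
    hAt1 C hC
end
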